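/- There exists an absolute constant c > 0 such that for every vector field v ∈ L^∞(−1,0; L²(B(1))) whose weak spatial gradient satisfies ∇v ∈ L²(Q(1)), and every 0 < r ≤ 1, one has ( r^{−2} ∬_{Q(r)} |v|³ dy ds )^{2/3} ≤ c ( A(r) + E(r) ). -/

import Mathlib

/- Setting: suitable weak solutions of the 3D incompressible Navier–Stokes equations,
   following Caffarelli–Kohn–Nirenberg.  The velocity field is `v`, its weak spatial
   gradient is `dv`, the pressure is `p` and the force is `f`. -/

open MeasureTheory Filter Metric Set Bornology
open scoped Topology ENNReal

noncomputable section

/-- Three dimensional Euclidean space. -/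
abbrev V3 : Type := EuclideanSpace ℝ (Fin 3)

/-- The standard basis of `V3`. -/
def e3 (i : Fin 3) : V3 := EuclideanSpace.single i 1

/-- Euclidean dot product. -/
def dot3 (a b : V3) : ℝ := ∑ i, a i * b i

/-- Squared Frobenius norm of a (gradient) matrix. -/
def fnormSq (A : V3 →L[ℝ] V3) : ℝ := ∑ i, ‖A (e3 i)‖ ^ 2

/-- Frobenius norm of a (gradient) matrix. -/
def fnorm (A : V3 →L[ℝ] V3) : ℝ := Real.sqrt (fnormSq A)

/-- Frobenius inner product of two (gradient) matrices. -/
def fdot (A B : V3 →L[ℝ] V3) : ℝ := ∑ i, dot3 (A (e3 i)) (B (e3 i))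

/-- Laplacian of a scalar function on `V3`. -/
def lap3 (φ : V3 → ℝ) (x : V3) : ℝ :=
  ∑ i, fderiv ℝ (fun y => fderiv ℝ φ y (e3 i)) x (e3 i)

/-- Smooth compactly supported scalar test function on a spatial domain. -/
def IsSpaceTest (U : Set V3) (φ : V3 → ℝ) : Prop :=
  ContDiff ℝ (⊤ : ℕ∞) φ ∧ HasCompactSupport φ ∧ tsupport φ ⊆ U

/-- Smooth compactly supported scalar test function on a space-time domain. -/
def IsTimeSpaceTest (U : Set V3) (I : Set ℝ) (φ : V3 → ℝ → ℝ) : Prop :=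
  ContDiff ℝ (⊤ : ℕ∞) (fun z : V3 × ℝ => φ z.1 z.2) ∧
  HasCompactSupport (fun z : V3 × ℝ => φ z.1 z.2) ∧
  tsupport (fun z : V3 × ℝ => φ z.1 z.2) ⊆ U ×ˢ I

/-- Smooth compactly supported vector test field on a space-time domain. -/
def IsVectorTest (U : Set V3) (I : Set ℝ) (ψ : V3 → ℝ → V3) : Prop :=
  ContDiff ℝ (⊤ : ℕ∞) (fun z : V3 × ℝ => ψ z.1 z.2) ∧
  HasCompactSupport (fun z : V3 × ℝ => ψ z.1 z.2) ∧
  tsupport (fun z : V3 × ℝ => ψ z.1 z.2) ⊆ U ×ˢ I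

/-- `Ω` has a `C²` boundary: near every boundary point, `Ω` is the sublevel set of a
`C²` function with nonvanishing gradient. -/
def HasC2Boundary (Ω : Set V3) : Prop :=
  ∀ x ∈ frontier Ω, ∃ (U : Set V3) (g : V3 → ℝ), IsOpen U ∧ x ∈ U ∧
    ContDiff ℝ 2 g ∧ (∀ y ∈ U, fderiv ℝ g y ≠ 0) ∧ Ω ∩ U = {y ∈ U | g y < 0}

/-- `dv` is the weak spatial gradient of `v` on `U × I`. -/
def IsWeakSpatialGradient (U : Set V3) (I : Set ℝ) (v : V3 → ℝ → V3)
    (dv : V3 → ℝ → V3 →L[ℝ] V3) : Prop :=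
  ∀ᵐ t ∂(volume.restrict I), ∀ φ : V3 → ℝ, IsSpaceTest U φ → ∀ u : V3,
    (∫ x in U, φ x • dv x t u) = - ∫ x in U, fderiv ℝ φ x u • v x t

/-- `(v, p)` is a suitable weak solution of the Navier–Stokes system with force `f` on
`Ω × (a, b)`, where `Ω ⊆ ℝ³` is a bounded `C²` domain; `dv` denotes the weak spatial
gradient of `v`. -/
structure IsSuitableWeakSolution (Ω : Set V3) (a b : ℝ) (v : V3 → ℝ → V3)
    (dv : V3 → ℝ → V3 →L[ℝ] V3) (p : V3 → ℝ → ℝ) (f : V3 → ℝ → V3) : Prop where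
  open_dom : IsOpen Ω
  bounded_dom : IsBounded Ω
  nonempty_dom : Ω.Nonempty
  c2_boundary : HasC2Boundary Ω
  time_lt : a < b
  meas_v : AEMeasurable (fun z : V3 × ℝ => v z.1 z.2) (volume.restrict (Ω ×ˢ Ioo a b))
  meas_dv : AEMeasurable (fun z : V3 × ℝ => dv z.1 z.2) (volume.restrict (Ω ×ˢ Ioo a b))
  meas_p : AEMeasurable (fun z : V3 × ℝ => p z.1 z.2) (volume.restrict (Ω ×ˢ Ioo a b))
  meas_f : AEMeasurable (fun z : V3 × ℝ => f z.1 z.2) (volume.restrict (Ω ×ˢ Ioo a b))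
  /-- `v ∈ L^∞(a,b; L²(Ω))`. -/
  v_linf_l2 : ∃ K : ℝ, ∀ᵐ t ∂(volume.restrict (Ioo a b)),
    IntegrableOn (fun x => ‖v x t‖ ^ 2) Ω volume ∧ (∫ x in Ω, ‖v x t‖ ^ 2) ≤ K
  /-- `∇v ∈ L²(Ω × (a,b))`. -/
  dv_l2 : IntegrableOn (fun z : V3 × ℝ => fnormSq (dv z.1 z.2)) (Ω ×ˢ Ioo a b) volume
  /-- `p ∈ L^{3/2}(Ω × (a,b))`. -/
  p_l32 : IntegrableOn (fun z : V3 × ℝ => |p z.1 z.2| ^ ((3:ℝ)/2)) (Ω ×ˢ Ioo a b) volume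
  /-- `f ∈ L^m(Ω × (a,b))` for some `m > 5/2`. -/
  f_lm : ∃ m : ℝ, 5/2 < m ∧
    IntegrableOn (fun z : V3 × ℝ => ‖f z.1 z.2‖ ^ m) (Ω ×ˢ Ioo a b) volume
  /-- `dv` is the weak spatial gradient of `v`. -/
  weak_gradient : IsWeakSpatialGradient Ω (Ioo a b) v dv
  /-- `v` is divergence free in the sense of distributions. -/
  div_free : ∀ᵐ t ∂(volume.restrict (Ioo a b)), ∀ φ : V3 → ℝ, IsSpaceTest Ω φ →
    (∫ x in Ω, fderiv ℝ φ x (v x t)) = 0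
  /-- The Navier–Stokes equations hold in the sense of distributions. -/
  nse : ∀ ψ : V3 → ℝ → V3, IsVectorTest Ω (Ioo a b) ψ →
    (∫ t in Ioo a b, ∫ x in Ω,
      (dot3 (v x t) (deriv (fun s => ψ x s) t)
        - fdot (dv x t) (fderiv ℝ (fun y => ψ y t) x)
        - dot3 (dv x t (v x t)) (ψ x t)
        + p x t * (∑ i, fderiv ℝ (fun y => ψ y t) x (e3 i) i)
        + dot3 (f x t) (ψ x t))) = 0
  /-- The generalized local energy inequality. -/
  energy : ∀ᵐ t ∂(volume.restrict (Ioo a b)), ∀ φ : V3 → ℝ → ℝ,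
    IsTimeSpaceTest Ω (Ioo a b) φ → (∀ x s, 0 ≤ φ x s) →
    (∫ x in Ω, ‖v x t‖ ^ 2 * φ x t)
        + 2 * ∫ s in Ioo a t, ∫ x in Ω, fnormSq (dv x s) * φ x s
      ≤ (∫ s in Ioo a t, ∫ x in Ω,
            ‖v x s‖ ^ 2 * (deriv (fun τ => φ x τ) s + lap3 (fun y => φ y s) x))
        + (∫ s in Ioo a t, ∫ x in Ω, ‖v x s‖ ^ 2 * fderiv ℝ (fun y => φ y s) x (v x s))
        + 2 * (∫ s in Ioo a t, ∫ x in Ω, p x s * fderiv ℝ (fun y => φ y s) x (v x s))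
        + 2 * (∫ s in Ioo a t, ∫ x in Ω, dot3 (f x s) (v x s) * φ x s)

/-- `E_q(z,r) = r^{-5+2q} ∬_{Q(z,r)} |∇v|^q`, centered at `z = (x₀,t₀)`. -/
def funEq (dv : V3 → ℝ → V3 →L[ℝ] V3) (q : ℝ) (z : V3 × ℝ) (r : ℝ) : ℝ :=
  r ^ (2 * q - 5) * ∫ t in Ioo (z.2 - r ^ 2) z.2, ∫ x in ball z.1 r, fnorm (dv x t) ^ q

/-- `E(z,r) = r⁻¹ ∬_{Q(z,r)} |∇v|²`, centered at `z = (x₀,t₀)`. -/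
def funE2 (dv : V3 → ℝ → V3 →L[ℝ] V3) (z : V3 × ℝ) (r : ℝ) : ℝ :=
  r⁻¹ * ∫ t in Ioo (z.2 - r ^ 2) z.2, ∫ x in ball z.1 r, fnormSq (dv x t)

/-- `z` is a regular point of `v`: `v` is essentially bounded on some parabolic
cylinder `Q(z,ρ)`. -/
def RegularPoint (v : V3 → ℝ → V3) (z : V3 × ℝ) : Prop :=
  ∃ ρ : ℝ, 0 < ρ ∧ ∃ K : ℝ,
    ∀ᵐ w : V3 × ℝ ∂(volume.restrict (ball z.1 ρ ×ˢ Ioo (z.2 - ρ ^ 2) z.2)),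
      ‖v w.1 w.2‖ ≤ K

/- Scaled functionals centered at the reference point `z = (0,0)`. -/

/-- `A(r) = r⁻¹ sup_{-r²<s<0} ∫_{B(r)} |v|²`. -/
def funA (v : V3 → ℝ → V3) (r : ℝ) : ℝ :=
  r⁻¹ * sSup ((fun s => ∫ x in ball (0 : V3) r, ‖v x s‖ ^ 2) '' Ioo (-r ^ 2) 0)

/-- `E(r) = r⁻¹ ∬_{Q(r)} |∇v|²`. -/
def funE (dv : V3 → ℝ → V3 →L[ℝ] V3) (r : ℝ) : ℝ :=
  r⁻¹ * ∫ t in Ioo (-r ^ 2) 0, ∫ x in ball (0 : V3) r, fnormSq (dv x t)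

/-- `E_q(r) = r^{-5+2q} ∬_{Q(r)} |∇v|^q`. -/
def funEqz (dv : V3 → ℝ → V3 →L[ℝ] V3) (q r : ℝ) : ℝ :=
  r ^ (2 * q - 5) * ∫ t in Ioo (-r ^ 2) 0, ∫ x in ball (0 : V3) r, fnorm (dv x t) ^ q

/-- `C(r) = r⁻² ∬_{Q(r)} |v|³`. -/
def funC (v : V3 → ℝ → V3) (r : ℝ) : ℝ :=
  r ^ (-2 : ℝ) * ∫ t in Ioo (-r ^ 2) 0, ∫ x in ball (0 : V3) r, ‖v x t‖ ^ 3

/-- `D(r) = r⁻² ∬_{Q(r)} |p - ⟨p⟩_{B(r)}|^{3/2}`. -/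
def funD (p : V3 → ℝ → ℝ) (r : ℝ) : ℝ :=
  r ^ (-2 : ℝ) * ∫ t in Ioo (-r ^ 2) 0, ∫ x in ball (0 : V3) r,
    |p x t - ⨍ y in ball (0 : V3) r, p y t| ^ ((3:ℝ)/2)

/-- `C̃(r) = r⁻² ∬_{Q(r)} |v - ⟨v⟩_{B(r)}|³`. -/
def funCt (v : V3 → ℝ → V3) (r : ℝ) : ℝ :=
  r ^ (-2 : ℝ) * ∫ t in Ioo (-r ^ 2) 0, ∫ x in ball (0 : V3) r,
    ‖v x t - ⨍ y in ball (0 : V3) r, v y t‖ ^ 3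

/-- `G(r) = r⁻¹ ∫_{-r²}^0 (∫_{B(r)} |v|⁶)^{1/3}`. -/
def funG (v : V3 → ℝ → V3) (r : ℝ) : ℝ :=
  r⁻¹ * ∫ t in Ioo (-r ^ 2) 0, (∫ x in ball (0 : V3) r, ‖v x t‖ ^ 6) ^ ((1:ℝ)/3)

/-- `P(r) = r⁻² inf_{c∈ℝ} ( ∫_{-r²}^0 (∫_{B(r)} |p - c|³)^{1/3} )²`. -/
def funP (p : V3 → ℝ → ℝ) (r : ℝ) : ℝ :=
  r ^ (-2 : ℝ) * ⨅ c : ℝ,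
    (∫ t in Ioo (-r ^ 2) 0, (∫ x in ball (0 : V3) r, |p x t - c| ^ 3) ^ ((1:ℝ)/3)) ^ 2

/-- `F(r) = ( ∫_{-r²}^0 (∫_{B(r)} |f|²)^{2/3} )^{3/2}`. -/
def funF (f : V3 → ℝ → V3) (r : ℝ) : ℝ :=
  (∫ t in Ioo (-r ^ 2) 0, (∫ x in ball (0 : V3) r, ‖f x t‖ ^ 2) ^ ((2:ℝ)/3)) ^ ((3:ℝ)/2)


theorem cs_w {α : Type*} [MeasurableSpace α] (μ : Measure α) {w g : α → ℝ≥0∞}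
    (hw : AEMeasurable w μ) (hg : AEMeasurable g μ) :
    (∫⁻ x, w x * g x ∂μ) ^ 2 ≤ (∫⁻ x, w x ∂μ) * ∫⁻ x, w x * g x ^ 2 ∂μ := by
  have h := ENNReal.lintegral_mul_le_Lp_mul_Lq μ Real.HolderConjugate.two_two
    (f := fun x => w x ^ (1/2 : ℝ)) (g := fun x => w x ^ (1/2 : ℝ) * g x)
    (hw.pow_const _) ((hw.pow_const _).mul hg)
  have e1 : ∀ a : ℝ≥0∞, a ^ (1/2 : ℝ) * a ^ (1/2 : ℝ) = a := by
    intro a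
    rw [← ENNReal.rpow_add_of_nonneg _ _ (by norm_num) (by norm_num)]; norm_num
  have e2 : ∀ a : ℝ≥0∞, (a ^ (1/2 : ℝ)) ^ (2:ℝ) = a := by
    intro a
    rw [← ENNReal.rpow_mul]; norm_num
  have e3 : ∀ a : ℝ≥0∞, (a ^ (1/2 : ℝ)) ^ 2 = a := by
    intro a
    rw [sq, e1]
  simp only [Pi.mul_apply, ← mul_assoc, e1, e2, ENNReal.mul_rpow_of_nonneg _ _ (zero_le_two : (0:ℝ) ≤ 2)] at h
  calc _ ≤ _ := pow_le_pow_left' h 2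
    _ = _ := by rw [mul_pow, e3, e3]; norm_cast

theorem cs_one {α : Type*} [MeasurableSpace α] (μ : Measure α) {g : α → ℝ≥0∞}
    (hg : AEMeasurable g μ) :
    (∫⁻ x, g x ∂μ) ^ 2 ≤ μ univ * ∫⁻ x, g x ^ 2 ∂μ := by
  simpa using cs_w μ (w := fun _ => 1) aemeasurable_const hg

theorem cs_inv {α : Type*} [MeasurableSpace α] (μ : Measure α) {w g : α → ℝ≥0∞}
    (hw : AEMeasurable w μ) (hg : AEMeasurable g μ) (h0 : ∀ᵐ x ∂μ, w x ≠ 0)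
    (h1 : ∀ᵐ x ∂μ, w x ≠ ⊤) :
    (∫⁻ x, g x ∂μ) ^ 2 ≤ (∫⁻ x, w x ∂μ) * ∫⁻ x, (w x)⁻¹ * g x ^ 2 ∂μ := by
  have h := cs_w μ (w := w) (g := fun x => (w x)⁻¹ * g x) hw (hw.inv.mul hg)
  have e1 : ∫⁻ x, w x * ((w x)⁻¹ * g x) ∂μ = ∫⁻ x, g x ∂μ := by
    apply lintegral_congr_ae
    filter_upwards [h0, h1] with x hx hx'
    rw [← mul_assoc, ENNReal.mul_inv_cancel hx hx', one_mul]
  have e2 : ∫⁻ x, w x * ((w x)⁻¹ * g x)^2 ∂μ = ∫⁻ x, (w x)⁻¹ * g x ^ 2 ∂μ := by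
    apply lintegral_congr_ae
    filter_upwards [h0, h1] with x hx hx'
    rw [mul_pow, sq ((w x)⁻¹), ← mul_assoc, ← mul_assoc, ENNReal.mul_inv_cancel hx hx', one_mul]
  rwa [e1, e2] at h

theorem holder4 {α : Type*} [MeasurableSpace α] (μ : Measure α) {w g : α → ℝ≥0∞}
    (hw : AEMeasurable w μ) (hg : AEMeasurable g μ) (h0 : ∀ᵐ x ∂μ, w x ≠ 0)
    (h1 : ∀ᵐ x ∂μ, w x ≠ ⊤) :
    (∫⁻ x, g x ∂μ) ^ 4 ≤ (∫⁻ x, w x ∂μ) ^ 3 * ∫⁻ x, (w x)⁻¹ ^ 3 * g x ^ 4 ∂μ := by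
  have a := cs_inv μ hw hg h0 h1
  have b := cs_inv μ (g := fun x => (w x)⁻¹ * g x ^ 2) hw (hw.inv.mul (hg.pow_const _)) h0 h1
  calc (∫⁻ x, g x ∂μ) ^ 4 = ((∫⁻ x, g x ∂μ) ^ 2) ^ 2 := by ring
    _ ≤ ((∫⁻ x, w x ∂μ) * ∫⁻ x, (w x)⁻¹ * g x ^ 2 ∂μ) ^ 2 := pow_le_pow_left' a 2
    _ = (∫⁻ x, w x ∂μ) ^ 2 * (∫⁻ x, (w x)⁻¹ * g x ^ 2 ∂μ) ^ 2 := by ring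
    _ ≤ (∫⁻ x, w x ∂μ) ^ 2 * ((∫⁻ x, w x ∂μ) *
          ∫⁻ x, (w x)⁻¹ * ((w x)⁻¹ * g x ^ 2) ^ 2 ∂μ) := by gcongr
    _ = _ := by
      rw [← mul_assoc, ← pow_succ]
      congr 2
      ext x; ring

theorem cov_aff (h : V3 → ℝ≥0∞) (hh : Measurable h) (b : V3) {t : ℝ} (ht : 0 < t) :
    ∫⁻ y, h (b + t • y) = ENNReal.ofReal (t⁻¹ ^ 3) * ∫⁻ y, h y := by
  have h1 : ∫⁻ y, h (b + t • y) = ∫⁻ y, h (b + y) ∂(Measure.map (t • ·) (volume : Measure V3)) := by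
    rw [lintegral_map (by fun_prop) (by fun_prop)]
  rw [h1]
  have := Measure.map_addHaar_smul (volume : Measure V3) ht.ne'
  have e : (fun x : V3 => t • x) = (t • ·) := rfl
  rw [this, lintegral_smul_measure, lintegral_add_left_eq_self]
  simp [abs_of_pos (pow_pos ht 3)]

theorem cov_ball (g : V3 → ℝ≥0∞) (hg : Measurable g) {ρ t : ℝ} (ht : 0 < t) (ht1 : t < 1)
    {x : V3} (hx : x ∈ ball (0 : V3) ρ) :
    ∫⁻ y in ball (0 : V3) ρ, g ((1 - t) • x + t • y) ≤
      ENNReal.ofReal (t⁻¹ ^ 3) * ∫⁻ y in ball (0 : V3) ρ, g y := by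
  rw [← lintegral_indicator measurableSet_ball, ← lintegral_indicator measurableSet_ball,
    ← cov_aff _ (hg.indicator measurableSet_ball) ((1 - t) • x) ht]
  apply lintegral_mono
  intro y
  by_cases hy : y ∈ ball (0 : V3) ρ
  · have : (1 - t) • x + t • y ∈ ball (0 : V3) ρ :=
      convex_ball (0 : V3) ρ hx hy (by linarith) ht.le (by ring)
    simp only [indicator_of_mem hy, indicator_of_mem this, le_refl]
  · simp only [indicator_of_notMem hy, zero_le]

/-- segment average operator -/
def segF (g : V3 → ℝ≥0∞) (ρ : ℝ) (x : V3) (t : ℝ) : ℝ≥0∞ :=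
  ∫⁻ y in ball (0 : V3) ρ, g ((1 - t) • x + t • y)

theorem segF_meas (g : V3 → ℝ≥0∞) (hg : Measurable g) (ρ : ℝ) :
    Measurable (fun z : V3 × ℝ => segF g ρ z.1 z.2) := by
  unfold segF
  apply Measurable.lintegral_prod_right' (f := fun p : (V3 × ℝ) × V3 => g ((1 - p.1.2) • p.1.1 + p.1.2 • p.2))
  exact hg.comp (by fun_prop)

theorem segF_pt (g : V3 → ℝ≥0∞) (hg : Measurable g) {ρ t : ℝ} (ht : 0 < t) (ht1 : t < 1)
    {x : V3} (hx : x ∈ ball (0 : V3) ρ) :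
    segF g ρ x t ^ 2 ≤ volume (ball (0 : V3) ρ) * (ENNReal.ofReal (t⁻¹ ^ 3) *
      ∫⁻ y in ball (0 : V3) ρ, g y ^ 2) := by
  have h := cs_one (volume.restrict (ball (0 : V3) ρ)) (g := fun y => g ((1 - t) • x + t • y))
    (Measurable.aemeasurable (hg.comp (by fun_prop)))
  rw [Measure.restrict_apply_univ] at h
  refine h.trans ?_
  gcongr
  exact cov_ball (fun y => g y ^ 2) (hg.pow_const 2) ht ht1 hx

theorem segF_L2 (g : V3 → ℝ≥0∞) (hg : Measurable g) {ρ t : ℝ} (ht : 0 < t) (ht1 : t < 1) :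
    ∫⁻ x in ball (0 : V3) ρ, segF g ρ x t ^ 2 ≤ 8 * volume (ball (0 : V3) ρ) ^ 2 *
      ∫⁻ y in ball (0 : V3) ρ, g y ^ 2 := by
  set B := ball (0 : V3) ρ
  set N := ∫⁻ y in B, g y ^ 2
  have key : ∀ s : ℝ, 1/2 ≤ s → ENNReal.ofReal (s⁻¹ ^ 3) ≤ 8 := by
    intro s hs
    have : s⁻¹ ≤ 2 := by
      rw [inv_le_comm₀ (by linarith) (by norm_num)]; linarith
    have h2 : s⁻¹ ^ 3 ≤ 2 ^ 3 := pow_le_pow_left₀ (by positivity) this 3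
    calc ENNReal.ofReal (s⁻¹ ^ 3) ≤ ENNReal.ofReal 8 := ENNReal.ofReal_le_ofReal (by linarith)
      _ = 8 := by norm_num
  rcases le_total (1/2) t with h | h
  · calc ∫⁻ x in B, segF g ρ x t ^ 2 ≤ ∫⁻ x in B, volume B * (8 * N) := by
          apply setLIntegral_mono measurable_const
          intro x hx
          refine (segF_pt g hg ht ht1 hx).trans ?_
          gcongr
          exact key t h
      _ = _ := by rw [setLIntegral_const]; ring
  · calc ∫⁻ x in B, segF g ρ x t ^ 2
        ≤ ∫⁻ x in B, volume B * ∫⁻ y in B, g ((1 - t) • x + t • y) ^ 2 := by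
          apply lintegral_mono
          intro x
          have h := cs_one (volume.restrict B) (g := fun y => g ((1 - t) • x + t • y))
            (Measurable.aemeasurable (hg.comp (by fun_prop)))
          rwa [Measure.restrict_apply_univ] at h
      _ = volume B * ∫⁻ y in B, ∫⁻ x in B, g ((1 - t) • x + t • y) ^ 2 := by
          have hm : Measurable (fun p : V3 × V3 => g ((1 - t) • p.1 + t • p.2) ^ 2) :=
            (hg.comp (by fun_prop)).pow_const 2
          rw [lintegral_const_mul, lintegral_lintegral_swap]
          · exact hm.aemeasurable
          · exact hm.lintegral_prod_right'
      _ ≤ volume B * ∫⁻ y in B, 8 * N := by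
          gcongr 1
          apply setLIntegral_mono measurable_const
          intro y hy
          have := cov_ball (fun y => g y ^ 2) (hg.pow_const 2) (t := 1 - t) (by linarith)
            (by linarith) hy
          refine le_trans (le_of_eq ?_) (this.trans ?_)
          · apply lintegral_congr; intro x
            rw [sub_sub_cancel, add_comm]
          · gcongr
            exact key _ (by linarith)
      _ = _ := by rw [setLIntegral_const]; ring

theorem segF_L4 (g : V3 → ℝ≥0∞) (hg : Measurable g) {ρ t : ℝ} (ht : 0 < t) (ht1 : t < 1) :
    ∫⁻ x in ball (0 : V3) ρ, segF g ρ x t ^ 4 ≤ ENNReal.ofReal (t⁻¹ ^ 3) *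
      (8 * volume (ball (0 : V3) ρ) ^ 3 * (∫⁻ y in ball (0 : V3) ρ, g y ^ 2) ^ 2) := by
  set B := ball (0 : V3) ρ
  set N := ∫⁻ y in B, g y ^ 2
  have hm : Measurable (fun x => segF g ρ x t) := (segF_meas g hg ρ).comp (by fun_prop : Measurable fun x : V3 => (x, t))
  calc ∫⁻ x in B, segF g ρ x t ^ 4
      ≤ ∫⁻ x in B, (volume B * (ENNReal.ofReal (t⁻¹ ^ 3) * N)) * segF g ρ x t ^ 2 := by
        apply setLIntegral_mono ((hm.pow_const 2).const_mul _)
        intro x hx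
        calc segF g ρ x t ^ 4 = segF g ρ x t ^ 2 * segF g ρ x t ^ 2 := by ring
          _ ≤ _ := by gcongr; exact segF_pt g hg ht ht1 hx
    _ = (volume B * (ENNReal.ofReal (t⁻¹ ^ 3) * N)) * ∫⁻ x in B, segF g ρ x t ^ 2 := by
        rw [lintegral_const_mul _ (hm.pow_const 2)]
    _ ≤ (volume B * (ENNReal.ofReal (t⁻¹ ^ 3) * N)) * (8 * volume B ^ 2 * N) := by
        gcongr; exact segF_L2 g hg ht ht1
    _ = _ := by ring

theorem rpow_fin {a : ℝ} (ha : -1 < a) : ∫⁻ t in Ioo (0:ℝ) 1, ENNReal.ofReal (t ^ a) < ⊤ := by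
  have h := intervalIntegral.intervalIntegrable_rpow' ha (a := 0) (b := 1)
  rw [intervalIntegrable_iff_integrableOn_Ioo_of_le zero_le_one] at h
  exact h.lintegral_lt_top

/-- the absolute constant of the segment estimate -/
def K0 : ℝ≥0∞ := (∫⁻ t in Ioo (0:ℝ) 1, ENNReal.ofReal (t ^ (-(5/6) : ℝ))) ^ 3 *
  ((∫⁻ t in Ioo (0:ℝ) 1, ENNReal.ofReal (t ^ (-(1/2) : ℝ))) * 8)

theorem K0_lt : K0 < ⊤ := by
  unfold K0
  have h1 := rpow_fin (a := -(5/6)) (by norm_num)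
  have h2 := rpow_fin (a := -(1/2)) (by norm_num)
  finiteness

theorem seg_total (g : V3 → ℝ≥0∞) (hg : Measurable g) (ρ : ℝ) :
    ∫⁻ x in ball (0 : V3) ρ, (∫⁻ t in Ioo (0:ℝ) 1, segF g ρ x t) ^ 4 ≤
      K0 * (volume (ball (0 : V3) ρ) ^ 3 * (∫⁻ y in ball (0 : V3) ρ, g y ^ 2) ^ 2) := by
  set B := ball (0 : V3) ρ
  set N := ∫⁻ y in B, g y ^ 2
  set w : ℝ → ℝ≥0∞ := fun t => ENNReal.ofReal (t ^ (-(5/6) : ℝ)) with hw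
  have hwm : Measurable w := by fun_prop
  have hm := segF_meas g hg ρ
  have hm1 : ∀ x, Measurable (fun t => segF g ρ x t) := fun x => hm.comp (by fun_prop : Measurable fun t : ℝ => (x, t))
  have hm2 : ∀ t, Measurable (fun x => segF g ρ x t) := fun t => hm.comp (by fun_prop : Measurable fun x : V3 => (x, t))
  have hm3 : Measurable (fun z : V3 × ℝ => (w z.2)⁻¹ ^ 3 * segF g ρ z.1 z.2 ^ 4) :=
    ((hwm.comp measurable_snd).inv.pow_const 3).mul (hm.pow_const 4)
  calc ∫⁻ x in B, (∫⁻ t in Ioo (0:ℝ) 1, segF g ρ x t) ^ 4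
      ≤ ∫⁻ x in B, (∫⁻ t in Ioo (0:ℝ) 1, w t) ^ 3 * ∫⁻ t in Ioo (0:ℝ) 1, (w t)⁻¹ ^ 3 * segF g ρ x t ^ 4 := by
        apply lintegral_mono
        intro x
        apply holder4 _ hwm.aemeasurable (hm1 x).aemeasurable
        · filter_upwards [ae_restrict_mem measurableSet_Ioo] with t ht
          have := Real.rpow_pos_of_pos ht.1 (-(5/6))
          simpa [hw] using this
        · exact Eventually.of_forall fun t => ENNReal.ofReal_ne_top
    _ = (∫⁻ t in Ioo (0:ℝ) 1, w t) ^ 3 * ∫⁻ t in Ioo (0:ℝ) 1, ∫⁻ x in B, (w t)⁻¹ ^ 3 * segF g ρ x t ^ 4 := by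
        rw [lintegral_const_mul _ hm3.lintegral_prod_right', lintegral_lintegral_swap hm3.aemeasurable]
    _ ≤ (∫⁻ t in Ioo (0:ℝ) 1, w t) ^ 3 * ∫⁻ t in Ioo (0:ℝ) 1, ENNReal.ofReal (t ^ (-(1/2) : ℝ)) * (8 * volume B ^ 3 * N ^ 2) := by
        gcongr 1
        apply setLIntegral_mono (by fun_prop)
        intro t ht
        rw [lintegral_const_mul _ ((hm2 t).pow_const 4)]
        calc (w t)⁻¹ ^ 3 * ∫⁻ x in B, segF g ρ x t ^ 4
            ≤ (w t)⁻¹ ^ 3 * (ENNReal.ofReal (t⁻¹ ^ 3) * (8 * volume B ^ 3 * N ^ 2)) := by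
              gcongr; exact segF_L4 g hg ht.1 ht.2
          _ = _ := by
              rw [← mul_assoc]
              congr 1
              have hp := Real.rpow_pos_of_pos ht.1 (-(5/6))
              rw [hw]; dsimp only
              rw [← ENNReal.ofReal_inv_of_pos hp, ← ENNReal.ofReal_pow (by positivity),
                ← ENNReal.ofReal_mul (by positivity)]
              congr 1
              rw [← Real.rpow_neg ht.1.le, ← Real.rpow_neg_one, ← Real.rpow_natCast, ← Real.rpow_natCast,
                ← Real.rpow_mul ht.1.le, ← Real.rpow_mul ht.1.le, ← Real.rpow_add ht.1]
              norm_num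
    _ = _ := by
        rw [lintegral_mul_const _ (by fun_prop)]
        unfold K0; ring

theorem seg_ineq {u : V3 → V3} (hu : ContDiff ℝ 1 u) {ρ : ℝ} {x y : V3}
    (hx : x ∈ ball (0 : V3) ρ) (hy : y ∈ ball (0 : V3) ρ) :
    ‖u x‖ₑ ≤ ‖u y‖ₑ + ENNReal.ofReal (2 * ρ) *
      ∫⁻ t in Ioo (0:ℝ) 1, ‖fderiv ℝ u ((1 - t) • x + t • y)‖ₑ := by
  have hd : ∀ t : ℝ, HasDerivAt (fun t : ℝ => u ((1 - t) • x + t • y))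
      (fderiv ℝ u ((1 - t) • x + t • y) (y - x)) t := by
    intro t
    have h1 : HasDerivAt (fun t : ℝ => (1 - t) • x + t • y) (y - x) t := by
      have := (((hasDerivAt_id t).const_sub 1).smul_const x).add ((hasDerivAt_id t).smul_const y)
      refine this.congr_deriv ?_
      rw [neg_smul, one_smul, one_smul, sub_eq_neg_add]
    exact ((hu.differentiable one_ne_zero _).hasFDerivAt).comp_hasDerivAt t h1
  have hc : Continuous (fun t : ℝ => fderiv ℝ u ((1 - t) • x + t • y) (y - x)) := by
    have := hu.continuous_fderiv one_ne_zero
    fun_prop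
  have h := intervalIntegral.integral_eq_sub_of_hasDerivAt (fun t _ => hd t)
    (hc.intervalIntegrable 0 1)
  simp only [sub_self, zero_smul, one_smul, zero_add, sub_zero, add_zero] at h
  have hyx : ‖y - x‖ ≤ 2 * ρ := by
    rw [mem_ball_zero_iff] at hx hy
    linarith [norm_sub_le y x]
  have e1 : ‖u y - u x‖ₑ ≤ ENNReal.ofReal (2 * ρ) *
      ∫⁻ t in Ioo (0:ℝ) 1, ‖fderiv ℝ u ((1 - t) • x + t • y)‖ₑ := by
    rw [← h, intervalIntegral.integral_of_le zero_le_one, ← lintegral_const_mul' _ _ ENNReal.ofReal_ne_top,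
      integral_Ioc_eq_integral_Ioo]
    refine (enorm_integral_le_lintegral_enorm _).trans ?_
    apply lintegral_mono
    intro t
    dsimp only
    refine (ContinuousLinearMap.le_opENorm _ _).trans ?_
    rw [mul_comm]
    gcongr
    rw [← ofReal_norm]
    exact ENNReal.ofReal_le_ofReal hyx
  calc ‖u x‖ₑ = ‖u y - (u y - u x)‖ₑ := by congr 1; abel
    _ ≤ ‖u y‖ₑ + ‖u y - u x‖ₑ := enorm_sub_le
    _ ≤ _ := by gcongr

theorem add_pow4 (a b : ℝ≥0∞) : (a + b) ^ 4 ≤ 8 * a ^ 4 + 8 * b ^ 4 := by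
  have h : ∀ a b : ℝ≥0∞, (a + b) ^ 2 ≤ 2 * (a ^ 2 + b ^ 2) := fun a b => by
    have := ENNReal.rpow_add_le_mul_rpow_add_rpow a b (p := 2) (by norm_num)
    norm_num at this
    exact_mod_cast this
  calc (a + b) ^ 4 = ((a + b) ^ 2) ^ 2 := by ring
    _ ≤ (2 * (a ^ 2 + b ^ 2)) ^ 2 := pow_le_pow_left' (h a b) 2
    _ = 4 * (a ^ 2 + b ^ 2) ^ 2 := by ring
    _ ≤ 4 * (2 * ((a ^ 2) ^ 2 + (b ^ 2) ^ 2)) := by gcongr; exact h _ _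
    _ = _ := by ring

/-- constant in the smooth inequality -/
def K1 : ℝ≥0∞ := 8 + 128 * K0

theorem K1_lt : K1 < ⊤ := by
  have := K0_lt
  unfold K1; finiteness

theorem smooth_ineq {u : V3 → V3} (hu : ContDiff ℝ 1 u) {ρ : ℝ} (hρ : 0 < ρ) :
    volume (ball (0 : V3) ρ) * ∫⁻ x in ball (0 : V3) ρ, ‖u x‖ₑ ^ 4 ≤
      K1 * ((∫⁻ x in ball (0 : V3) ρ, ‖u x‖ₑ ^ 2) ^ 2 +
        ENNReal.ofReal ρ ^ 4 * (∫⁻ x in ball (0 : V3) ρ, ‖fderiv ℝ u x‖ₑ ^ 2) ^ 2) := by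
  set B := ball (0 : V3) ρ with hB
  set g : V3 → ℝ≥0∞ := fun x => ‖fderiv ℝ u x‖ₑ with hg
  have hgm : Measurable g := (hu.continuous_fderiv one_ne_zero).enorm.measurable
  have hum : Measurable (fun x => ‖u x‖ₑ) := hu.continuous.enorm.measurable
  set N := ∫⁻ y in B, g y ^ 2
  set M := ∫⁻ y in B, ‖u y‖ₑ ^ 2
  set L := ∫⁻ y in B, ‖u y‖ₑ
  set V := volume B with hV
  have hV0 : V ≠ 0 := (measure_ball_pos _ _ hρ).ne'
  have hV1 : V ≠ ⊤ := measure_ball_lt_top.ne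
  have hsm := segF_meas g hgm ρ
  have pt : ∀ x ∈ B, (V * ‖u x‖ₑ) ≤ L + ENNReal.ofReal (2 * ρ) * ∫⁻ t in Ioo (0:ℝ) 1, segF g ρ x t := by
    intro x hx
    have hm : Measurable (fun p : V3 × ℝ => g ((1 - p.2) • x + p.2 • p.1)) := hgm.comp (by fun_prop)
    calc V * ‖u x‖ₑ = ∫⁻ y in B, ‖u x‖ₑ := by rw [setLIntegral_const, mul_comm]
      _ ≤ ∫⁻ y in B, (‖u y‖ₑ + ENNReal.ofReal (2 * ρ) *
          ∫⁻ t in Ioo (0:ℝ) 1, g ((1 - t) • x + t • y)) := by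
          apply setLIntegral_mono
          · exact hum.add (hm.lintegral_prod_right'.const_mul _)
          · intro y hy
            exact seg_ineq hu hx hy
      _ = _ := by
          rw [lintegral_add_left hum, lintegral_const_mul _ hm.lintegral_prod_right',
            lintegral_lintegral_swap hm.aemeasurable]
          rfl
  have hL : L ^ 4 ≤ V ^ 2 * M ^ 2 := by
    have := cs_one (volume.restrict B) hum.aemeasurable
    rw [Measure.restrict_apply_univ] at this
    calc L ^ 4 = (L ^ 2) ^ 2 := by ring
      _ ≤ (V * M) ^ 2 := pow_le_pow_left' this 2
      _ = _ := by ring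
  have main : V ^ 4 * ∫⁻ x in B, ‖u x‖ₑ ^ 4 ≤ V ^ 3 * (K1 * (M ^ 2 + ENNReal.ofReal ρ ^ 4 * N ^ 2)) := by
    have hm4 : Measurable (fun x => (∫⁻ t in Ioo (0:ℝ) 1, segF g ρ x t) ^ 4) :=
      hsm.lintegral_prod_right'.pow_const 4
    calc V ^ 4 * ∫⁻ x in B, ‖u x‖ₑ ^ 4 = ∫⁻ x in B, (V * ‖u x‖ₑ) ^ 4 := by
          rw [← lintegral_const_mul _ (hum.pow_const 4)]
          simp only [mul_pow]
      _ ≤ ∫⁻ x in B, (8 * L ^ 4 + (128 * ENNReal.ofReal ρ ^ 4) * (∫⁻ t in Ioo (0:ℝ) 1, segF g ρ x t) ^ 4) := by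
          apply setLIntegral_mono ((hm4.const_mul _).const_add _)
          intro x hx
          refine (pow_le_pow_left' (pt x hx) 4).trans ((add_pow4 _ _).trans (le_of_eq ?_))
          rw [ENNReal.ofReal_mul zero_le_two]
          simp only [ENNReal.ofReal_ofNat]
          ring
      _ = 8 * L ^ 4 * V + (128 * ENNReal.ofReal ρ ^ 4) * ∫⁻ x in B, (∫⁻ t in Ioo (0:ℝ) 1, segF g ρ x t) ^ 4 := by
          rw [lintegral_add_left measurable_const, setLIntegral_const, lintegral_const_mul _ hm4]
      _ ≤ 8 * (V ^ 2 * M ^ 2) * V + (128 * ENNReal.ofReal ρ ^ 4) * (K0 * (V ^ 3 * N ^ 2)) := by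
          gcongr
          exact seg_total g hgm ρ
      _ = V ^ 3 * (8 * M ^ 2 + 128 * K0 * (ENNReal.ofReal ρ ^ 4 * N ^ 2)) := by ring
      _ ≤ V ^ 3 * (K1 * M ^ 2 + K1 * (ENNReal.ofReal ρ ^ 4 * N ^ 2)) := by
          gcongr
          · exact le_self_add
          · exact le_add_self
      _ = _ := by ring
  rw [show V ^ 4 * ∫⁻ x in B, ‖u x‖ₑ ^ 4 = V ^ 3 * (V * ∫⁻ x in B, ‖u x‖ₑ ^ 4) by ring] at main
  exact (ENNReal.mul_le_mul_iff_right (pow_ne_zero 3 hV0) (ENNReal.pow_ne_top hV1)).1 main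

theorem opE_le_fnorm (A : V3 →L[ℝ] V3) (x : V3) : ‖A x‖ ≤ fnorm A * ‖x‖ := by
  have hx : x = ∑ i, x i • e3 i := by
    ext j
    simp [e3, Pi.single_apply]
  have h1 : ‖A x‖ ≤ ∑ i, |x i| * ‖A (e3 i)‖ := by
    conv_lhs => rw [hx, map_sum]
    refine (norm_sum_le _ _).trans (le_of_eq ?_)
    apply Finset.sum_congr rfl
    intro i _
    rw [map_smul, norm_smul, Real.norm_eq_abs]
  refine h1.trans ?_
  have h2 := Real.sum_mul_le_sqrt_mul_sqrt Finset.univ (fun i => |x i|) (fun i => ‖A (e3 i)‖)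
  refine h2.trans (le_of_eq ?_)
  rw [mul_comm, EuclideanSpace.norm_eq]
  simp only [fnorm, fnormSq, sq_abs, Real.norm_eq_abs]

theorem opE_le_fnormE (A : V3 →L[ℝ] V3) (x : V3) : ‖A x‖ₑ ≤ ENNReal.ofReal (fnorm A) * ‖x‖ₑ := by
  rw [← ofReal_norm, ← ofReal_norm, ← ENNReal.ofReal_mul (show 0 ≤ fnorm A from Real.sqrt_nonneg _)]
  exact ENNReal.ofReal_le_ofReal (opE_le_fnorm A x)

theorem normed_lint (φ : ContDiffBump (0 : V3)) (x : V3) :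
    ∫⁻ y, ENNReal.ofReal (φ.normed volume (x - y)) = 1 := by
  rw [lintegral_sub_left_eq_self (fun y => ENNReal.ofReal (φ.normed volume y)) x,
    ← ofReal_integral_eq_lintegral_ofReal φ.integrable_normed
      (Eventually.of_forall φ.nonneg_normed), φ.integral_normed, ENNReal.ofReal_one]

theorem normed_lint' (φ : ContDiffBump (0 : V3)) (y : V3) :
    ∫⁻ x, ENNReal.ofReal (φ.normed volume (x - y)) = 1 := by
  rw [lintegral_sub_right_eq_self (fun y => ENNReal.ofReal (φ.normed volume y)) y,
    ← ofReal_integral_eq_lintegral_ofReal φ.integrable_normed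
      (Eventually.of_forall φ.nonneg_normed), φ.integral_normed, ENNReal.ofReal_one]

theorem jensen_conv (φ : ContDiffBump (0 : V3)) {q : V3 → ℝ≥0∞} (hq : AEMeasurable q) :
    ∫⁻ x, (∫⁻ y, ENNReal.ofReal (φ.normed volume (x - y)) * q y) ^ 2 ≤ ∫⁻ y, q y ^ 2 := by
  have hη : Continuous (φ.normed (volume : Measure V3)) := φ.continuous_normed
  have hm : Measurable (fun p : V3 × V3 => ENNReal.ofReal (φ.normed volume (p.1 - p.2))) := by
    fun_prop
  have hm1 : ∀ x : V3, Measurable (fun y : V3 => ENNReal.ofReal (φ.normed volume (x - y))) := by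
    intro x; fun_prop
  calc ∫⁻ x, (∫⁻ y, ENNReal.ofReal (φ.normed volume (x - y)) * q y) ^ 2
      ≤ ∫⁻ x, ∫⁻ y, ENNReal.ofReal (φ.normed volume (x - y)) * q y ^ 2 := by
        apply lintegral_mono
        intro x
        have := cs_w volume (hm1 x).aemeasurable hq
        rwa [normed_lint, one_mul] at this
    _ = ∫⁻ y, ∫⁻ x, ENNReal.ofReal (φ.normed volume (x - y)) * q y ^ 2 := by
        rw [lintegral_lintegral_swap]
        exact hm.aemeasurable.mul (hq.comp_snd.pow_const 2)
    _ = _ := by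
        apply lintegral_congr
        intro y
        rw [lintegral_mul_const _ (by fun_prop), normed_lint', one_mul]

open scoped Convolution in
/-- mollification -/
def moll (φ : ContDiffBump (0 : V3)) (w : V3 → V3) : V3 → V3 :=
  (φ.normed volume ⋆[ContinuousLinearMap.lsmul ℝ ℝ, volume] w)

theorem moll_contDiff (φ : ContDiffBump (0 : V3)) {w : V3 → V3} (hw : Integrable w) :
    ContDiff ℝ 1 (moll φ w) :=
  (φ.hasCompactSupport_normed (μ := volume)).contDiff_convolution_left (n := 1) _ φ.contDiff_normed
    hw.locallyIntegrable

theorem moll_bound (φ : ContDiffBump (0 : V3)) (w : V3 → V3) (x : V3) :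
    ‖moll φ w x‖ₑ ≤ ∫⁻ y, ENNReal.ofReal (φ.normed volume (x - y)) * ‖w y‖ₑ := by
  unfold moll
  rw [convolution_eq_swap]
  refine (enorm_integral_le_lintegral_enorm _).trans (le_of_eq ?_)
  apply lintegral_congr
  intro y
  rw [ContinuousLinearMap.lsmul_apply, enorm_smul, Real.enorm_of_nonneg (φ.nonneg_normed _)]

theorem moll_fderiv (φ : ContDiffBump (0 : V3)) {w : V3 → V3} (hw : Integrable w) (x e : V3) :
    fderiv ℝ (moll φ w) x e = ∫ y, fderiv ℝ (φ.normed volume) (x - y) e • w y := by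
  have h := (φ.hasCompactSupport_normed (μ := volume)).hasFDerivAt_convolution_left (μ := (volume : Measure V3))
    (ContinuousLinearMap.lsmul ℝ ℝ) (φ.contDiff_normed (n := 1) (μ := volume)) hw.locallyIntegrable x
  have h' : fderiv ℝ (moll φ w) x = _ := h.fderiv
  rw [h', convolution_eq_swap, ContinuousLinearMap.integral_apply]
  · rfl
  · have := (φ.hasCompactSupport_normed (μ := (volume : Measure V3))).fderiv (𝕜 := ℝ) |>.convolutionExists_left
      ((ContinuousLinearMap.lsmul ℝ ℝ : ℝ →L[ℝ] V3 →L[ℝ] V3).precompL V3)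
      ((φ.contDiff_normed (n := 1) (μ := volume)).continuous_fderiv one_ne_zero) hw.locallyIntegrable x
    exact this.integrable_swap

theorem moll_fderiv_bound (φ : ContDiffBump (0 : V3)) {u : V3 → V3} {G : V3 → V3 →L[ℝ] V3}
    {R : ℝ} (hR : R ≤ 1) (hw : Integrable ((ball (0 : V3) R).indicator u))
    (hweak : ∀ ψ : V3 → ℝ, IsSpaceTest (ball (0 : V3) 1) ψ → ∀ e : V3,
      (∫ x in ball (0 : V3) 1, ψ x • G x e) = - ∫ x in ball (0 : V3) 1, fderiv ℝ ψ x e • u x)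
    {x : V3} (hx : x ∈ ball (0 : V3) (R - φ.rOut)) :
    ‖fderiv ℝ (moll φ ((ball (0 : V3) R).indicator u)) x‖ₑ ≤
      ∫⁻ y, ENNReal.ofReal (φ.normed volume (x - y)) *
        (ball (0 : V3) R).indicator (fun y => ENNReal.ofReal (fnorm (G y))) y := by
  apply ContinuousLinearMap.opENorm_le_bound
  intro e
  rw [moll_fderiv φ hw]
  set η := φ.normed (volume : Measure V3) with hη
  set ψ : V3 → ℝ := fun y => η (x - y) with hψ
  have hηc : ContDiff ℝ (⊤ : ℕ∞) η := φ.contDiff_normed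
  have hfd : ∀ y, fderiv ℝ ψ y e = - fderiv ℝ η (x - y) e := by
    intro y
    have h1 : HasFDerivAt η (fderiv ℝ η (x - y)) (x - y) :=
      ((hηc.differentiable (by simp)) _).hasFDerivAt
    have h2 : HasFDerivAt (fun y : V3 => x - y) (-ContinuousLinearMap.id ℝ V3) y :=
      (hasFDerivAt_id y).const_sub x
    have h3 : HasFDerivAt ψ _ y := h1.comp y h2
    rw [h3.fderiv]
    simp
  have hxn : ‖x‖ < R - φ.rOut := by simpa using hx
  have hsub : closedBall x φ.rOut ⊆ ball (0 : V3) R := by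
    intro y hy
    rw [mem_closedBall, dist_eq_norm] at hy
    rw [mem_ball_zero_iff]
    calc ‖y‖ = ‖(y - x) + x‖ := by simp
      _ ≤ ‖y - x‖ + ‖x‖ := norm_add_le _ _
      _ < R := by linarith
  have hts : tsupport ψ ⊆ closedBall x φ.rOut := by
    apply closure_minimal _ isClosed_closedBall
    intro y hy
    have : x - y ∈ Function.support η := hy
    rw [hη, φ.support_normed_eq, mem_ball_zero_iff] at this
    rw [mem_closedBall, dist_comm, dist_eq_norm]
    exact this.le
  have htest : IsSpaceTest (ball (0 : V3) 1) ψ := by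
    refine ⟨hηc.comp (contDiff_const.sub contDiff_id), ?_, ?_⟩
    · exact HasCompactSupport.of_support_subset_isCompact (isCompact_closedBall x φ.rOut)
        ((subset_tsupport _).trans hts)
    · exact (hts.trans hsub).trans (ball_subset_ball hR)
  have hz : ∀ y, y ∉ ball (0 : V3) R → ψ y = 0 := fun y hy =>
    image_eq_zero_of_notMem_tsupport fun h => hy (hsub (hts h))
  have hz' : ∀ y, y ∉ ball (0 : V3) R → fderiv ℝ ψ y e = 0 := fun y hy => by
    have : fderiv ℝ ψ y = 0 := image_eq_zero_of_notMem_tsupport fun h =>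
      hy (hsub (hts (tsupport_fderiv_subset ℝ h)))
    rw [this]; rfl
  have key : (∫ y, fderiv ℝ η (x - y) e • (ball (0 : V3) R).indicator u y)
      = ∫ y in ball (0 : V3) 1, ψ y • G y e := by
    rw [hweak ψ htest e, ← integral_indicator measurableSet_ball, ← integral_neg]
    apply integral_congr_ae
    apply Eventually.of_forall
    intro y
    dsimp only
    by_cases hy : y ∈ ball (0 : V3) R
    · rw [indicator_of_mem hy, indicator_of_mem (ball_subset_ball hR hy), hfd, neg_smul, neg_neg]
    · rw [indicator_of_notMem hy, smul_zero]
      by_cases hy1 : y ∈ ball (0 : V3) 1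
      · rw [indicator_of_mem hy1, hz' y hy, zero_smul, neg_zero]
      · rw [indicator_of_notMem hy1, neg_zero]
  rw [key, ← lintegral_mul_const' _ _ enorm_ne_top]
  refine (enorm_integral_le_lintegral_enorm _).trans ((setLIntegral_le_lintegral _ _).trans ?_)
  apply lintegral_mono
  intro y
  dsimp only
  by_cases hy : y ∈ ball (0 : V3) R
  · rw [indicator_of_mem hy, enorm_smul, mul_assoc, Real.enorm_of_nonneg (φ.nonneg_normed _)]
    gcongr
    exact opE_le_fnormE _ _
  · rw [hz y hy]; simp

theorem moll_ineq (φ : ContDiffBump (0 : V3)) {u : V3 → V3} {G : V3 → V3 →L[ℝ] V3}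
    {R : ℝ} (hR : R ≤ 1) (hφ : φ.rOut ≤ R / 2) (hw : Integrable ((ball (0 : V3) R).indicator u))
    (hG : AEMeasurable (fun x => ENNReal.ofReal (fnorm (G x))) (volume.restrict (ball (0 : V3) R)))
    (hweak : ∀ ψ : V3 → ℝ, IsSpaceTest (ball (0 : V3) 1) ψ → ∀ e : V3,
      (∫ x in ball (0 : V3) 1, ψ x • G x e) = - ∫ x in ball (0 : V3) 1, fderiv ℝ ψ x e • u x) :
    volume (ball (0 : V3) (R / 2)) * ∫⁻ x in ball (0 : V3) (R - φ.rOut),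
        ‖moll φ ((ball (0 : V3) R).indicator u) x‖ₑ ^ 4 ≤
      K1 * ((∫⁻ x in ball (0 : V3) R, ‖u x‖ₑ ^ 2) ^ 2 +
        ENNReal.ofReal R ^ 4 * (∫⁻ x in ball (0 : V3) R, ENNReal.ofReal (fnormSq (G x))) ^ 2) := by
  have hpos := φ.rOut_pos
  set w := (ball (0 : V3) R).indicator u with hwd
  have hS := smooth_ineq (moll_contDiff φ hw) (ρ := R - φ.rOut) (by linarith)
  refine le_trans ?_ (hS.trans ?_)
  · gcongr
    linarith
  have i1 : ∫⁻ x in ball (0 : V3) (R - φ.rOut), ‖moll φ w x‖ₑ ^ 2 ≤ ∫⁻ x in ball (0 : V3) R, ‖u x‖ₑ ^ 2 := by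
    calc _ ≤ ∫⁻ x, ‖moll φ w x‖ₑ ^ 2 := setLIntegral_le_lintegral _ _
      _ ≤ _ := lintegral_mono fun x => pow_le_pow_left' (moll_bound φ w x) 2
      _ ≤ _ := jensen_conv φ hw.1.enorm
      _ = _ := by
        rw [← lintegral_indicator measurableSet_ball]
        apply lintegral_congr
        intro x
        by_cases hx : x ∈ ball (0 : V3) R <;> simp [hwd, hx]
  have i2 : ∫⁻ x in ball (0 : V3) (R - φ.rOut), ‖fderiv ℝ (moll φ w) x‖ₑ ^ 2 ≤
      ∫⁻ x in ball (0 : V3) R, ENNReal.ofReal (fnormSq (G x)) := by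
    calc _ ≤ ∫⁻ x in ball (0 : V3) (R - φ.rOut), (∫⁻ y, ENNReal.ofReal (φ.normed volume (x - y)) *
        (ball (0 : V3) R).indicator (fun y => ENNReal.ofReal (fnorm (G y))) y) ^ 2 :=
          setLIntegral_mono' measurableSet_ball fun x hx =>
            pow_le_pow_left' (moll_fderiv_bound φ hR hw hweak hx) 2
      _ ≤ _ := setLIntegral_le_lintegral _ _
      _ ≤ _ := jensen_conv φ ((aemeasurable_indicator_iff measurableSet_ball).2 hG)
      _ = _ := by
        rw [← lintegral_indicator measurableSet_ball]
        apply lintegral_congr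
        intro x
        have hn : 0 ≤ fnormSq (G x) := Finset.sum_nonneg fun i _ => by positivity
        by_cases hx : x ∈ ball (0 : V3) R
        · simp only [indicator_of_mem hx]
          rw [← ENNReal.ofReal_pow (show 0 ≤ fnorm (G x) from Real.sqrt_nonneg _), fnorm, Real.sq_sqrt hn]
        · simp only [indicator_of_notMem hx]; simp
  gcongr
  linarith

theorem fixed_time {u : V3 → V3} {G : V3 → V3 →L[ℝ] V3}
    {R : ℝ} (hR0 : 0 < R) (hR : R ≤ 1) (hw : Integrable ((ball (0 : V3) R).indicator u))
    (hG : AEMeasurable (fun x => ENNReal.ofReal (fnorm (G x))) (volume.restrict (ball (0 : V3) R)))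
    (hweak : ∀ ψ : V3 → ℝ, IsSpaceTest (ball (0 : V3) 1) ψ → ∀ e : V3,
      (∫ x in ball (0 : V3) 1, ψ x • G x e) = - ∫ x in ball (0 : V3) 1, fderiv ℝ ψ x e • u x) :
    volume (ball (0 : V3) (R / 2)) * ∫⁻ x in ball (0 : V3) R, ‖u x‖ₑ ^ 4 ≤
      K1 * ((∫⁻ x in ball (0 : V3) R, ‖u x‖ₑ ^ 2) ^ 2 +
        ENNReal.ofReal R ^ 4 * (∫⁻ x in ball (0 : V3) R, ENNReal.ofReal (fnormSq (G x))) ^ 2) := by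
  set w := (ball (0 : V3) R).indicator u with hwd
  let φ : ℕ → ContDiffBump (0 : V3) := fun n =>
    ⟨R / (n + 2) / 2, R / (n + 2), by positivity, half_lt_self (by positivity)⟩
  have hout : ∀ n, (φ n).rOut = R / (n + 2) := fun n => rfl
  have hin : ∀ n, (φ n).rIn = R / (n + 2) / 2 := fun n => rfl
  have hlim : Tendsto (fun n => (φ n).rOut) atTop (𝓝 0) := by
    simp only [hout]
    apply Tendsto.div_atTop tendsto_const_nhds
    exact tendsto_atTop_add_const_right _ _ tendsto_natCast_atTop_atTop
  have hle : ∀ n, (φ n).rOut ≤ R / 2 := fun n => by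
    rw [hout]
    gcongr
    have : (0:ℝ) ≤ n := Nat.cast_nonneg n
    linarith
  have hae := ContDiffBump.ae_convolution_tendsto_right_of_locallyIntegrable (μ := (volume : Measure V3))
    (K := 2) hlim (Eventually.of_forall fun n => by rw [hout, hin]; linarith) hw.locallyIntegrable
  set F : ℕ → V3 → ℝ≥0∞ := fun n => (ball (0 : V3) (R - (φ n).rOut)).indicator
    (fun x => ‖moll (φ n) w x‖ₑ ^ 4) with hF
  have hFm : ∀ n, Measurable (F n) := fun n =>
    ((moll_contDiff (φ n) hw).continuous.enorm.measurable.pow_const 4).indicator measurableSet_ball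
  set T := K1 * ((∫⁻ x in ball (0 : V3) R, ‖u x‖ₑ ^ 2) ^ 2 +
        ENNReal.ofReal R ^ 4 * (∫⁻ x in ball (0 : V3) R, ENNReal.ofReal (fnormSq (G x))) ^ 2) with hT
  set V := volume (ball (0 : V3) (R / 2))
  have hV0 : V ≠ 0 := (measure_ball_pos _ _ (by linarith)).ne'
  have hV1 : V ≠ ⊤ := measure_ball_lt_top.ne
  have hb : ∀ n, ∫⁻ x in ball (0 : V3) R, F n x ≤ T / V := by
    intro n
    rw [ENNReal.le_div_iff_mul_le (Or.inl hV0) (Or.inl hV1), mul_comm]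
    refine le_trans ?_ (moll_ineq (φ n) hR (hle n) hw hG hweak)
    refine mul_le_mul_right ?_ V
    refine (setLIntegral_le_lintegral _ _).trans (le_of_eq ?_)
    rw [hF, lintegral_indicator measurableSet_ball]
  have hfat : ∫⁻ x in ball (0 : V3) R, ‖u x‖ₑ ^ 4 ≤ T / V := by
    calc ∫⁻ x in ball (0 : V3) R, ‖u x‖ₑ ^ 4 = ∫⁻ x in ball (0 : V3) R, liminf (fun n => F n x) atTop := by
          apply lintegral_congr_ae
          filter_upwards [ae_restrict_of_ae hae, ae_restrict_mem measurableSet_ball] with x hx hxB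
          symm
          apply Tendsto.liminf_eq
          have h1 : Tendsto (fun n => ‖moll (φ n) w x‖ₑ ^ 4) atTop (𝓝 (‖u x‖ₑ ^ 4)) := by
            have h2 : w x = u x := indicator_of_mem hxB _
            rw [← h2]
            exact ((ENNReal.continuous_pow 4).tendsto _).comp ((continuous_enorm.tendsto _).comp hx)
          refine h1.congr' ?_
          have hxn : 0 < R - ‖x‖ := by
            rw [mem_ball_zero_iff] at hxB; linarith
          filter_upwards [hlim.eventually (gt_mem_nhds hxn)] with n hn
          have : x ∈ ball (0 : V3) (R - (φ n).rOut) := by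
            rw [mem_ball_zero_iff]; linarith
          rw [hF]; dsimp only; rw [indicator_of_mem this]
      _ ≤ liminf (fun n => ∫⁻ x in ball (0 : V3) R, F n x) atTop := lintegral_liminf_le hFm
      _ ≤ T / V := liminf_le_of_frequently_le' (Eventually.of_forall hb).frequently
  rwa [ENNReal.le_div_iff_mul_le (Or.inl hV0) (Or.inl hV1), mul_comm] at hfat

/-- volume of the unit ball -/
def kap : ℝ := (volume (ball (0 : V3) 1)).toReal

theorem kap_pos : 0 < kap :=
  ENNReal.toReal_pos (measure_ball_pos _ _ one_pos).ne' measure_ball_lt_top.ne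

theorem vol_half {R : ℝ} (hR : 0 < R) :
    volume (ball (0 : V3) (R / 2)) = ENNReal.ofReal (R ^ 3 / 8 * kap) := by
  rw [Measure.addHaar_ball_of_pos _ _ (by linarith), ENNReal.ofReal_mul (by positivity), kap,
    ENNReal.ofReal_toReal measure_ball_lt_top.ne]
  simp only [finrank_euclideanSpace, Fintype.card_fin]
  congr 2
  ring

theorem fixed_real {u : V3 → V3} {G : V3 → V3 →L[ℝ] V3}
    {R : ℝ} (hR0 : 0 < R) (hR : R ≤ 1)
    (hum : AEStronglyMeasurable u (volume.restrict (ball (0 : V3) R)))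
    (hu2 : IntegrableOn (fun x => ‖u x‖ ^ 2) (ball (0 : V3) R))
    (hG : IntegrableOn (fun x => fnormSq (G x)) (ball (0 : V3) R))
    (hweak : ∀ ψ : V3 → ℝ, IsSpaceTest (ball (0 : V3) 1) ψ → ∀ e : V3,
      (∫ x in ball (0 : V3) 1, ψ x • G x e) = - ∫ x in ball (0 : V3) 1, fderiv ℝ ψ x e • u x) :
    R ^ 3 / 8 * kap * (∫ x in ball (0 : V3) R, ‖u x‖ ^ 3) ^ 2 ≤
      (∫ x in ball (0 : V3) R, ‖u x‖ ^ 2) * (K1.toReal *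
        ((∫ x in ball (0 : V3) R, ‖u x‖ ^ 2) ^ 2 +
          R ^ 4 * (∫ x in ball (0 : V3) R, fnormSq (G x)) ^ 2)) := by
  set B := ball (0 : V3) R
  set M := ∫ x in B, ‖u x‖ ^ 2 with hM
  set D := ∫ x in B, fnormSq (G x) with hD
  set J := ∫ x in B, ‖u x‖ ^ 3 with hJ
  have hsq : ∀ x, 0 ≤ fnormSq (G x) := fun x => Finset.sum_nonneg fun i _ => by positivity
  have hM0 : 0 ≤ M := integral_nonneg fun x => by positivity
  have hD0 : 0 ≤ D := integral_nonneg hsq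
  have hJ0 : 0 ≤ J := integral_nonneg fun x => by positivity
  have en : ∀ (x : V3) (n : ℕ), ‖u x‖ₑ ^ n = ENNReal.ofReal (‖u x‖ ^ n) := fun x n => by
    rw [← ofReal_norm, ENNReal.ofReal_pow (norm_nonneg _)]
  have hMe : ∫⁻ x in B, ‖u x‖ₑ ^ 2 = ENNReal.ofReal M := by
    simp only [en]
    rw [hM, ofReal_integral_eq_lintegral_ofReal hu2 (Eventually.of_forall fun x => by positivity)]
  have hDe : ∫⁻ x in B, ENNReal.ofReal (fnormSq (G x)) = ENNReal.ofReal D := by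
    rw [hD, ofReal_integral_eq_lintegral_ofReal hG (Eventually.of_forall hsq)]
  have hJe : ENNReal.ofReal J ≤ ∫⁻ x in B, ‖u x‖ₑ ^ 3 := by
    simp only [en]
    have hm3 : AEStronglyMeasurable (fun x => ‖u x‖ ^ 3) (volume.restrict B) := hum.norm.pow 3
    rw [hJ, integral_eq_lintegral_of_nonneg_ae (Eventually.of_forall fun x => by positivity) hm3]
    exact ENNReal.ofReal_toReal_le
  have hw : Integrable (B.indicator u) := by
    rw [integrable_indicator_iff measurableSet_ball]
    have hmem : MemLp u 2 (volume.restrict B) := (memLp_two_iff_integrable_sq_norm hum).2 hu2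
    have : IsFiniteMeasure (volume.restrict B) := ⟨by
      rw [Measure.restrict_apply_univ]; exact measure_ball_lt_top⟩
    exact hmem.integrable one_le_two
  have hGm : AEMeasurable (fun x => ENNReal.ofReal (fnorm (G x))) (volume.restrict B) :=
    (hG.1.aemeasurable.sqrt).ennreal_ofReal
  have hft := fixed_time hR0 hR hw hGm hweak
  have hcs := cs_w (volume.restrict B) (w := fun x => ‖u x‖ₑ ^ 2) (g := fun x => ‖u x‖ₑ)
    (hum.enorm.pow_const 2) hum.enorm
  simp only [← pow_succ, ← pow_add] at hcs
  norm_num at hcs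
  have hfin : ENNReal.ofReal (R ^ 3 / 8 * kap * J ^ 2) ≤ ENNReal.ofReal (M * (K1.toReal * (M ^ 2 + R ^ 4 * D ^ 2))) := by
    have hk := kap_pos
    calc ENNReal.ofReal (R ^ 3 / 8 * kap * J ^ 2)
        = volume (ball (0 : V3) (R / 2)) * ENNReal.ofReal J ^ 2 := by
          rw [ENNReal.ofReal_mul (by positivity), vol_half hR0, ENNReal.ofReal_pow hJ0]
      _ ≤ volume (ball (0 : V3) (R / 2)) * (∫⁻ x in B, ‖u x‖ₑ ^ 3) ^ 2 := by gcongr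
      _ ≤ volume (ball (0 : V3) (R / 2)) * ((∫⁻ x in B, ‖u x‖ₑ ^ 2) * ∫⁻ x in B, ‖u x‖ₑ ^ 4) := by gcongr
      _ = (∫⁻ x in B, ‖u x‖ₑ ^ 2) * (volume (ball (0 : V3) (R / 2)) * ∫⁻ x in B, ‖u x‖ₑ ^ 4) := by ring
      _ ≤ _ := mul_le_mul_right hft _
      _ = _ := by
          rw [hMe, hDe, ENNReal.ofReal_mul hM0, ENNReal.ofReal_mul ENNReal.toReal_nonneg,
            ENNReal.ofReal_toReal K1_lt.ne, ENNReal.ofReal_add (by positivity) (by positivity),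
            ENNReal.ofReal_mul (by positivity), ENNReal.ofReal_pow hM0, ENNReal.ofReal_pow hD0,
            ENNReal.ofReal_pow hR0.le]
  exact (ENNReal.ofReal_le_ofReal_iff (by positivity)).1 hfin

/-- the constant in the linearised fixed time estimate -/
def c1 : ℝ := Real.sqrt (8 * K1.toReal / kap)

theorem le_of_sq_le_sq_aux {a b : ℝ} (h : a ^ 2 ≤ b ^ 2) (hb : 0 ≤ b) : a ≤ b :=
  (le_abs_self _).trans (abs_le_of_sq_le_sq h hb)

theorem fixed_lin {R M D J S : ℝ} (hR0 : 0 < R) (hM0 : 0 ≤ M) (hD0 : 0 ≤ D)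
    (hMS : M ≤ S)
    (h : R ^ 3 / 8 * kap * J ^ 2 ≤ M * (K1.toReal * (M ^ 2 + R ^ 4 * D ^ 2))) :
    J ≤ c1 * Real.sqrt (S / R) * R⁻¹ * (S + R ^ 2 * D) := by
  have hk := kap_pos
  have hK : 0 ≤ K1.toReal := ENNReal.toReal_nonneg
  have hS : 0 ≤ S := hM0.trans hMS
  have hc : 0 ≤ c1 := Real.sqrt_nonneg _
  refine le_of_sq_le_sq_aux ?_ (by positivity)
  rw [mul_pow, mul_pow, mul_pow, c1, Real.sq_sqrt (by positivity), Real.sq_sqrt (by positivity)]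
  have h2 : M * (K1.toReal * (M ^ 2 + R ^ 4 * D ^ 2)) ≤ S * (K1.toReal * (S + R ^ 2 * D) ^ 2) := by
    have h3 : M ^ 2 + R ^ 4 * D ^ 2 ≤ (S + R ^ 2 * D) ^ 2 := by
      have : M ^ 2 ≤ S ^ 2 := by gcongr
      have : 0 ≤ S * (R ^ 2 * D) := by positivity
      nlinarith
    gcongr
  have h4 := h.trans h2
  have h5 : 8 * K1.toReal / kap * (S / R) * R⁻¹ ^ 2 * (S + R ^ 2 * D) ^ 2 =
      (S * (K1.toReal * (S + R ^ 2 * D) ^ 2)) / (R ^ 3 / 8 * kap) := by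
    field_simp
  rw [h5, le_div_iff₀ (by positivity)]
  linarith

theorem statement17_main (v : V3 → ℝ → V3) (dv : V3 → ℝ → V3 →L[ℝ] V3)
    (hv : AEMeasurable (fun z : V3 × ℝ => v z.1 z.2)
          (volume.restrict (ball (0 : V3) 1 ×ˢ Ioo (-1 : ℝ) 0)))
    (hK : ∃ K : ℝ, ∀ s ∈ Ioo (-1 : ℝ) 0,
          IntegrableOn (fun x => ‖v x s‖ ^ 2) (ball (0 : V3) 1) volume ∧
          (∫ x in ball (0 : V3) 1, ‖v x s‖ ^ 2) ≤ K)
    (hweak : IsWeakSpatialGradient (ball (0 : V3) 1) (Ioo (-1 : ℝ) 0) v dv)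
    (hdv : IntegrableOn (fun z : V3 × ℝ => fnormSq (dv z.1 z.2))
          (ball (0 : V3) 1 ×ˢ Ioo (-1 : ℝ) 0) volume)
    (r : ℝ) (hr0 : 0 < r) (hr : r ≤ 1) :
    (r ^ (-2 : ℝ) * ∫ t in Ioo (-r ^ 2) 0, ∫ x in ball (0 : V3) r, ‖v x t‖ ^ 3)
              ^ ((2:ℝ)/3)
            ≤ (c1 ^ ((2:ℝ)/3) + 1) * (funA v r + funE dv r) := by
  obtain ⟨K, hK⟩ := hK
  have hr2 : r ^ 2 ≤ 1 := pow_le_one₀ hr0.le hr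
  have hI : Ioo (-r ^ 2) 0 ⊆ Ioo (-1 : ℝ) 0 := Ioo_subset_Ioo_left (by linarith)
  have hB : ball (0 : V3) r ⊆ ball (0 : V3) 1 := ball_subset_ball hr
  have hsq : ∀ x t, 0 ≤ fnormSq (dv x t) := fun x t => Finset.sum_nonneg fun i _ => by positivity
  have hmeas : (volume : Measure (V3 × ℝ)).restrict (ball (0 : V3) r ×ˢ Ioo (-r ^ 2) 0) =
      (volume.restrict (ball (0 : V3) r)).prod (volume.restrict (Ioo (-r ^ 2) 0)) := by
    rw [Measure.prod_restrict]; rfl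
  have hle : (volume : Measure (V3 × ℝ)).restrict (ball (0 : V3) r ×ˢ Ioo (-r ^ 2) 0) ≤
      volume.restrict (ball (0 : V3) 1 ×ˢ Ioo (-1 : ℝ) 0) :=
    Measure.restrict_mono (prod_mono hB hI) le_rfl
  have hv' := (hv.mono_measure hle).aestronglyMeasurable
  have hdv' := Integrable.mono_measure hdv hle
  rw [hmeas] at hv' hdv'
  have s1 := hv'.prod_swap.prodMk_left
  have s2 := hdv'.prod_left_ae
  have s3 := hdv'.integral_prod_right
  have s4 := ae_restrict_of_ae_restrict_of_subset hI hweak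
  set S := sSup ((fun s => ∫ x in ball (0 : V3) r, ‖v x s‖ ^ 2) '' Ioo (-r ^ 2) 0) with hSdef
  have hbdd : BddAbove ((fun s => ∫ x in ball (0 : V3) r, ‖v x s‖ ^ 2) '' Ioo (-r ^ 2) 0) := by
    refine ⟨K, ?_⟩
    rintro _ ⟨s, hs, rfl⟩
    obtain ⟨h1, h2⟩ := hK s (hI hs)
    refine le_trans ?_ h2
    exact setIntegral_mono_set h1 (Eventually.of_forall fun x => by positivity) hB.eventuallyLE
  have hMS : ∀ s ∈ Ioo (-r ^ 2) 0, ∫ x in ball (0 : V3) r, ‖v x s‖ ^ 2 ≤ S := fun s hs =>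
    le_csSup hbdd ⟨s, hs, rfl⟩
  have hS0 : 0 ≤ S := Real.sSup_nonneg (by
    rintro _ ⟨s, hs, rfl⟩
    exact integral_nonneg fun x => by positivity)
  set Dt : ℝ → ℝ := fun t => ∫ x in ball (0 : V3) r, fnormSq (dv x t) with hDt
  have hpt : ∀ᵐ t ∂(volume.restrict (Ioo (-r ^ 2) 0)), (∫ x in ball (0 : V3) r, ‖v x t‖ ^ 3) ≤
      c1 * Real.sqrt (S / r) * r⁻¹ * (S + r ^ 2 * Dt t) := by
    filter_upwards [s1, s2, s4, ae_restrict_mem measurableSet_Ioo] with t h1 h2 h4 ht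
    exact fixed_lin hr0 (integral_nonneg fun x => by positivity) (integral_nonneg fun x => hsq x t)
      (hMS t ht) (fixed_real hr0 hr h1 ((hK t (hI ht)).1.mono_set hB) h2 h4)
  have hDint : Integrable Dt (volume.restrict (Ioo (-r ^ 2) 0)) := s3
  have hint := integral_mono_of_nonneg
    (Eventually.of_forall fun t => integral_nonneg fun x => by positivity)
    (((integrable_const S).add (hDint.const_mul (r ^ 2))).const_mul
      (c1 * Real.sqrt (S / r) * r⁻¹)) hpt
  have hval : ∫ t in Ioo (-r ^ 2) 0, c1 * Real.sqrt (S / r) * r⁻¹ * (S + r ^ 2 * Dt t) =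
      c1 * Real.sqrt (S / r) * r⁻¹ * (r ^ 2 * S + r ^ 2 * ∫ t in Ioo (-r ^ 2) 0, Dt t) := by
    rw [integral_const_mul, integral_add (integrable_const S) (hDint.const_mul (r ^ 2)),
      integral_const_mul]
    simp [sq_nonneg]
  have hA : funA v r = S / r := by rw [funA, ← hSdef]; ring
  have hE : funE dv r = (∫ t in Ioo (-r ^ 2) 0, Dt t) / r := by rw [funE]; ring
  have hE0 : 0 ≤ funE dv r := by
    rw [hE]
    exact div_nonneg (integral_nonneg fun t => integral_nonneg fun x => hsq x t) hr0.le
  have hA0 : 0 ≤ funA v r := by rw [hA]; positivity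
  have hc : 0 ≤ c1 := Real.sqrt_nonneg _
  set X := funA v r + funE dv r with hX
  have hX0 : 0 ≤ X := add_nonneg hA0 hE0
  have hrm : r ^ (-2 : ℝ) = (r ^ 2)⁻¹ := by
    rw [Real.rpow_neg hr0.le]; norm_num
  have hJ0 : 0 ≤ ∫ t in Ioo (-r ^ 2) 0, ∫ x in ball (0 : V3) r, ‖v x t‖ ^ 3 :=
    integral_nonneg fun t => integral_nonneg fun x => by positivity
  have hfin : r ^ (-2 : ℝ) * (∫ t in Ioo (-r ^ 2) 0, ∫ x in ball (0 : V3) r, ‖v x t‖ ^ 3) ≤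
      c1 * X ^ ((3:ℝ)/2) := by
    rw [hrm]
    calc _ ≤ (r ^ 2)⁻¹ * (c1 * Real.sqrt (S / r) * r⁻¹ * (r ^ 2 * S + r ^ 2 * ∫ t in Ioo (-r ^ 2) 0, Dt t)) := by
          rw [← hval]
          exact mul_le_mul_of_nonneg_left hint (by positivity)
      _ = c1 * (Real.sqrt (funA v r) * X) := by
          rw [hX, hA, hE]; field_simp
      _ ≤ c1 * (Real.sqrt X * X) := by
          gcongr
          linarith
      _ = _ := by
          congr 1
          rcases hX0.eq_or_lt with h | h
          · rw [← h]; norm_num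
          · rw [Real.sqrt_eq_rpow]
            nth_rewrite 2 [← Real.rpow_one X]
            rw [← Real.rpow_add h]; norm_num
  calc _ ≤ (c1 * X ^ ((3:ℝ)/2)) ^ ((2:ℝ)/3) := by
        apply Real.rpow_le_rpow (by rw [hrm]; positivity) hfin (by norm_num)
    _ = c1 ^ ((2:ℝ)/3) * X := by
        rw [Real.mul_rpow hc (by positivity), ← Real.rpow_mul hX0]; norm_num
    _ ≤ _ := by nlinarith

theorem statement17 :
    ∃ c : ℝ, 0 < c ∧
      ∀ (v : V3 → ℝ → V3) (dv : V3 → ℝ → V3 →L[ℝ] V3),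
        AEMeasurable (fun z : V3 × ℝ => v z.1 z.2)
          (volume.restrict (ball (0 : V3) 1 ×ˢ Ioo (-1 : ℝ) 0)) →
        AEMeasurable (fun z : V3 × ℝ => dv z.1 z.2)
          (volume.restrict (ball (0 : V3) 1 ×ˢ Ioo (-1 : ℝ) 0)) →
        (∃ K : ℝ, ∀ s ∈ Ioo (-1 : ℝ) 0,
          IntegrableOn (fun x => ‖v x s‖ ^ 2) (ball (0 : V3) 1) volume ∧
          (∫ x in ball (0 : V3) 1, ‖v x s‖ ^ 2) ≤ K) →
        IsWeakSpatialGradient (ball (0 : V3) 1) (Ioo (-1 : ℝ) 0) v dv →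
        IntegrableOn (fun z : V3 × ℝ => fnormSq (dv z.1 z.2))
          (ball (0 : V3) 1 ×ˢ Ioo (-1 : ℝ) 0) volume →
        ∀ r : ℝ, 0 < r → r ≤ 1 →
          (r ^ (-2 : ℝ) * ∫ t in Ioo (-r ^ 2) 0, ∫ x in ball (0 : V3) r, ‖v x t‖ ^ 3)
              ^ ((2:ℝ)/3)
            ≤ c * (funA v r + funE dv r) := by
  refine ⟨c1 ^ ((2:ℝ)/3) + 1, ?_, ?_⟩
  · have : 0 ≤ c1 ^ ((2:ℝ)/3) := Real.rpow_nonneg (Real.sqrt_nonneg _) _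
    linarith
  · intro v dv hv _ hK hw hd r hr0 hr
    exact statement17_main v dv hv hK hw hd r hr0 hr

end
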